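/- arXiv:2604.22007 — 2 statements merged into one kernel-verified Lean document; each statement's English description precedes it below -/
import Mathlib

section
/- Let n ≥ 2. The number of solutions x ∈ K_n of the equation x·a_1 = f equals 1 + |K_{n-1}|, i.e. the cardinality of the set {x ∈ K_n : x·a_1 = f} is 1 + |K_{n-1}|. -/
namespace Kiselman

/-- The defining relations of Kiselman's semigroup on the free monoid over `Fin n`,
where the index `i : Fin n` represents the generator `a_{i+1}` (so letters are 0-based). -/
def Rel (n : ℕ) : FreeMonoid (Fin n) → FreeMonoid (Fin n) → Prop := fun u v =>
  (∃ i : Fin n, u = .of i * .of i ∧ v = .of i) ∨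
  (∃ i j : Fin n, j < i ∧
    ((u = .of i * .of j * .of i ∧ v = .of i * .of j) ∨
     (u = .of j * .of i * .of j ∧ v = .of i * .of j)))

/-- Kiselman's semigroup (monoid) `K n`, presented by the relations `Rel n`. -/
def K (n : ℕ) : Type := (conGen (Rel n)).Quotient

instance (n : ℕ) : Monoid (K n) := inferInstanceAs (Monoid (conGen (Rel n)).Quotient)

/-- The canonical epimorphism `φ` from the free monoid onto `K n`. -/
def phi (n : ℕ) : FreeMonoid (Fin n) →* K n := Con.mk' _

/-- `φ` applied to a word given as a list of (0-based) letters. -/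
def phiL (n : ℕ) (w : List (Fin n)) : K n := phi n (FreeMonoid.ofList w)

/-- The generator `a_{i+1}` of `K n` (`i` is the 0-based index). -/
def gen {n : ℕ} (i : Fin n) : K n := phi n (FreeMonoid.of i)

/-- The word `a_hi a_{hi-1} ⋯ a_lo` (letters named 1-based), as a list of 0-based indices:
`[hi-1, hi-2, …, lo-1]` (capped at `n`). -/
def descList (n lo hi : ℕ) : List (Fin n) :=
  ((List.finRange n).filter (fun k => decide (lo ≤ k.val + 1 ∧ k.val + 1 ≤ hi))).reverse

/-- The zero element `f = a_n a_{n-1} ⋯ a_2 a_1` of `K n`. -/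
def fEl (n : ℕ) : K n := phiL n (descList n 1 n)

/-- A word `w` is canonical if for every factorization `w = p ++ [i] ++ u ++ [i] ++ q`
there are letters `j > i` and `k < i` occurring in `u`. -/
def Canonical {n : ℕ} (w : List (Fin n)) : Prop :=
  ∀ (p u q : List (Fin n)) (i : Fin n),
    w = p ++ [i] ++ u ++ [i] ++ q →
    (∃ j ∈ u, i < j) ∧ (∃ k ∈ u, k < i)

/-- The submonoid of `K n` generated by `{a_2, a_3, …, a_n}`. -/
def upper (n : ℕ) : Submonoid (K n) := Submonoid.closure (gen '' {i : Fin n | i.val ≠ 0})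

/-- The submonoid of `K n` generated by `{a_1, a_2, …, a_{n-1}}`. -/
def lower (n : ℕ) : Submonoid (K n) := Submonoid.closure (gen '' {i : Fin n | i.val + 1 ≠ n})

/-- `m(x) = min { i ∈ {0,…,n} : x ⬝ (a_i a_{i-1} ⋯ a_1) = f }`. -/
noncomputable def mIdx {n : ℕ} (x : K n) : ℕ :=
  sInf {i : ℕ | x * phiL n (descList n 1 i) = fEl n}

/-!
Write `a` for the smallest generator `gen 0` of `K (n + 1)`; the other generators span a copy of
`K n`, whose zero element we call `z`, so that `z * a` is the zero element of `K (n + 1)`. Deleting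
every `a` but the last from a word does not change its value. Hence every `x` either lies in `K n`
or has the form `p * a * q` with `p` and `q` in `K n`, and `x * a = z * a` iff deleting every `a`
from `x` leaves `z`. So the solutions are `z` and the products `p * a * q` with `p * q = z`. The
latter condition forces the word `p * q` to contain all its letters in decreasing order as a
subword; then `p * a * q` absorbs on the right every generator other than `a`, and
`p * a * q = p * a * q * z = p * a * z`. Conversely, every `p * a * z` is a solution, and it
determines `p`, as an action of `K (n + 1)` on `Option (K n)` shows.
-/

/-- A family of elements of a monoid that satisfies the defining relations of Kiselman's
semigroup, so that families indexed by `Fin n` are the homomorphisms out of `K n`. -/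
structure IsKiselman {ι M : Type*} [LT ι] [Monoid M] (g : ι → M) : Prop where
  mul_self (i : ι) : g i * g i = g i
  mul_mul_of_lt {i j : ι} : j < i → g i * g j * g i = g i * g j
  mul_mul_of_gt {i j : ι} : j < i → g j * g i * g j = g i * g j

namespace IsKiselman

variable {M : Type*} [Monoid M]

theorem comp_strictMono {ι κ : Type*} [Preorder ι] [Preorder κ] {g : ι → M} (hg : IsKiselman g)
    {σ : κ → ι} (hσ : StrictMono σ) : IsKiselman (g ∘ σ) where
  mul_self i := hg.mul_self (σ i)
  mul_mul_of_lt h := hg.mul_mul_of_lt (hσ h)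
  mul_mul_of_gt h := hg.mul_mul_of_gt (hσ h)

theorem map {ι N : Type*} [LT ι] [Monoid N] {g : ι → M} (hg : IsKiselman g) (f : M →* N) :
    IsKiselman (f ∘ g) where
  mul_self i := by simp [← map_mul, hg.mul_self]
  mul_mul_of_lt h := by simp [← map_mul, hg.mul_mul_of_lt h]
  mul_mul_of_gt h := by simp [← map_mul, hg.mul_mul_of_gt h]

theorem cons {n : ℕ} {g : Fin n → M} (hg : IsKiselman g) {m : M} (mul_self : m * m = m)
    (mul_mul_left : ∀ i, g i * m * g i = g i * m) (mul_mul_right : ∀ i, m * g i * m = g i * m) :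
    IsKiselman (Fin.cons m g : Fin (n + 1) → M) where
  mul_self := Fin.cases mul_self hg.mul_self
  mul_mul_of_lt {i j} h := by
    obtain ⟨i, rfl⟩ := Fin.exists_succ_eq_of_ne_zero h.ne_bot
    cases j using Fin.cases with
    | zero => exact mul_mul_left i
    | succ j => exact hg.mul_mul_of_lt (Fin.succ_lt_succ_iff.1 h)
  mul_mul_of_gt {i j} h := by
    obtain ⟨i, rfl⟩ := Fin.exists_succ_eq_of_ne_zero h.ne_bot
    cases j using Fin.cases with
    | zero => exact mul_mul_right i
    | succ j => exact hg.mul_mul_of_gt (Fin.succ_lt_succ_iff.1 h)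

end IsKiselman

variable {n : ℕ}

theorem isKiselman_gen : IsKiselman (gen : Fin n → K n) where
  mul_self i := (Con.eq _).2 (ConGen.Rel.of _ _ (.inl ⟨i, rfl, rfl⟩))
  mul_mul_of_lt {i j} h :=
    (Con.eq _).2 (ConGen.Rel.of _ _ (.inr ⟨i, j, h, .inl ⟨rfl, rfl⟩⟩))
  mul_mul_of_gt {i j} h :=
    (Con.eq _).2 (ConGen.Rel.of _ _ (.inr ⟨i, j, h, .inr ⟨rfl, rfl⟩⟩))

theorem closure_range_gen : Submonoid.closure (Set.range (gen : Fin n → K n)) = ⊤ := by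
  have range_gen : Set.range (gen : Fin n → K n) = phi n '' Set.range FreeMonoid.of :=
    Set.range_comp (phi n) FreeMonoid.of
  rw [range_gen, ← MonoidHom.map_mclosure, FreeMonoid.closure_range_of, ← MonoidHom.mrange_eq_map]
  exact MonoidHom.mrange_eq_top.2 Con.mk'_surjective

@[elab_as_elim]
theorem induction_right {motive : K n → Prop} (x : K n) (one : motive 1)
    (mul_gen : ∀ x i, motive x → motive (x * gen i)) : motive x :=
  Submonoid.induction_of_closure_eq_top_right closure_range_gen x one
    fun x _ ⟨i, hi⟩ hx => hi ▸ mul_gen x i hx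

/-- The universal property of `K n`: the homomorphism sending each `gen i` to `g i`. -/
def lift {M : Type*} [Monoid M] (g : Fin n → M) (hg : IsKiselman g) : K n →* M :=
  Con.lift (conGen (Rel n)) (FreeMonoid.lift g) <| Con.conGen_le.2 <| by
    rintro u v (⟨i, rfl, rfl⟩ | ⟨i, j, h, ⟨rfl, rfl⟩ | ⟨rfl, rfl⟩⟩)
    · simpa [Con.ker_rel] using hg.mul_self i
    · simpa [Con.ker_rel] using hg.mul_mul_of_lt h
    · simpa [Con.ker_rel] using hg.mul_mul_of_gt h

@[simp]
theorem lift_gen {M : Type*} [Monoid M] (g : Fin n → M) (hg : IsKiselman g) (i : Fin n) :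
    lift g hg (gen i) = g i :=
  FreeMonoid.lift_eval_of g i

instance : Subsingleton (K 0) :=
  subsingleton_of_forall_eq 1 fun x => by
    induction x using induction_right with
    | one => rfl
    | mul_gen _ i => exact i.elim0

/-- The embedding of `K n` into `K (n + 1)` as the submonoid generated by all generators but the
smallest one. -/
def shift (n : ℕ) : K n →* K (n + 1) :=
  lift (gen ∘ Fin.succ) (isKiselman_gen.comp_strictMono Fin.strictMono_succ)

@[simp]
theorem shift_gen (i : Fin n) : shift n (gen i) = gen i.succ := lift_gen ..

/-- The retraction `K (n + 1) → K n` of `shift n` that deletes the smallest generator. -/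
def del (n : ℕ) : K (n + 1) →* K n :=
  lift (Fin.cons 1 gen) <|
    isKiselman_gen.cons (by simp) (by simp [isKiselman_gen.mul_self]) (by simp)

@[simp]
theorem del_gen_zero : del n (gen 0) = 1 := lift_gen ..

@[simp]
theorem del_gen_succ (i : Fin n) : del n (gen i.succ) = gen i := lift_gen ..

@[simp]
theorem del_shift (x : K n) : del n (shift n x) = x := by
  induction x using induction_right with
  | one => simp
  | mul_gen x i ih => simp [ih]

theorem mul_gen_zero_eq_shift_del_mul (x : K (n + 1)) :
    x * gen 0 = shift n (del n x) * gen 0 := by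
  induction x using induction_right with
  | one => simp
  | mul_gen x i ih =>
    cases i using Fin.cases with
    | zero => simp [mul_assoc, isKiselman_gen.mul_self, ih]
    | succ i =>
      have absorb : gen 0 * gen i.succ * gen 0 = (gen i.succ * gen 0 : K (n + 1)) :=
        isKiselman_gen.mul_mul_of_gt i.succ_pos
      calc x * gen i.succ * gen 0
          = x * gen 0 * gen i.succ * gen 0 := by rw [mul_assoc, ← absorb]; simp only [mul_assoc]
        _ = shift n (del n x) * (gen 0 * gen i.succ * gen 0) := by rw [ih]; simp only [mul_assoc]
        _ = shift n (del n (x * gen i.succ)) * gen 0 := by rw [absorb]; simp [mul_assoc]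

theorem eq_shift_or_eq_shift_mul_gen_zero_mul_shift (x : K (n + 1)) :
    (∃ y, x = shift n y) ∨ ∃ p q, x = shift n p * gen 0 * shift n q := by
  induction x using induction_right with
  | one => exact .inl ⟨1, by simp⟩
  | mul_gen x i ih =>
    cases i using Fin.cases with
    | zero => exact .inr ⟨del n x, 1, by simpa using mul_gen_zero_eq_shift_del_mul x⟩
    | succ i =>
      rcases ih with ⟨y, rfl⟩ | ⟨p, q, rfl⟩
      · exact .inl ⟨y * gen i, by simp⟩
      · exact .inr ⟨p, q * gen i, by simp [mul_assoc]⟩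

instance finite_K (n : ℕ) : Finite (K n) := by
  induction n with
  | zero => infer_instance
  | succ n ih =>
    have surjective : Function.Surjective
        (Sum.elim (shift n) fun z : K n × K n => shift n z.1 * gen 0 * shift n z.2) := fun x => by
      rcases eq_shift_or_eq_shift_mul_gen_zero_mul_shift x with ⟨y, rfl⟩ | ⟨p, q, rfl⟩
      · exact ⟨.inl y, rfl⟩
      · exact ⟨.inr (p, q), rfl⟩
    exact .of_surjective _ surjective

theorem descList_one_self (n : ℕ) : descList n 1 n = (List.finRange n).reverse := by
  simp [descList]

theorem phiL_map_succ (w : List (Fin n)) : phiL (n + 1) (w.map Fin.succ) = shift n (phiL n w) := by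
  induction w with
  | nil => exact (map_one (shift n)).symm
  | cons i w ih =>
    calc gen i.succ * phiL (n + 1) (w.map Fin.succ)
        = shift n (gen i) * shift n (phiL n w) := by rw [ih, shift_gen]
      _ = shift n (gen i * phiL n w) := (map_mul ..).symm

theorem fEl_succ (n : ℕ) : fEl (n + 1) = shift n (fEl n) * gen 0 := by
  rw [fEl, fEl, descList_one_self, descList_one_self, List.finRange_succ, List.reverse_cons,
    ← List.map_reverse, ← phiL_map_succ]
  exact map_mul (phi (n + 1)) (FreeMonoid.ofList _) (FreeMonoid.of 0)

theorem mul_fEl (x : K n) : x * fEl n = fEl n := by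
  induction n with
  | zero => exact Subsingleton.elim _ _
  | succ n ih => rw [fEl_succ, ← mul_assoc, mul_gen_zero_eq_shift_del_mul]; simp [ih]

theorem mul_gen_zero_eq_fEl_iff (x : K (n + 1)) :
    x * gen 0 = fEl (n + 1) ↔ del n x = fEl n := by
  refine ⟨fun h => by simpa [fEl_succ] using congrArg (del n) h, fun h => ?_⟩
  rw [mul_gen_zero_eq_shift_del_mul, h, fEl_succ]

theorem end_one_apply {α : Type*} (a : α) : (1 : Function.End α) a = a := rfl

theorem end_mul_apply {α : Type*} (f g : Function.End α) (a : α) : (f * g) a = f (g a) := rfl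

/-- The map on `ℕ` that sends `i` to `i + 1` and fixes every other number; it is the action of
`gen i` under `level`. -/
def raise (i : Fin n) : Function.End ℕ := fun l => if l = i.val then i.val + 1 else l

theorem raise_apply (i : Fin n) (l : ℕ) : raise i l = if l = i.val then i.val + 1 else l := rfl

theorem isKiselman_raise : IsKiselman (raise : Fin n → Function.End ℕ) where
  mul_self i := by
    funext l
    grind [end_mul_apply, raise_apply]
  mul_mul_of_lt {i j} h := by
    rw [Fin.lt_def] at h
    funext l
    grind [end_mul_apply, raise_apply]
  mul_mul_of_gt {i j} h := by
    rw [Fin.lt_def] at h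
    funext l
    grind [end_mul_apply, raise_apply]

/-- The left action of `K n` on `ℕ` through `raise`. A word sends `l` to `n` iff it contains
`gen (n - 1)`, …, `gen (l + 1)`, `gen l` in this order as a subword. -/
def level (n : ℕ) : K n →* Function.End ℕ := lift raise isKiselman_raise

theorem level_gen (i : Fin n) (l : ℕ) :
    level n (gen i) l = if l = i.val then i.val + 1 else l := by
  rw [level, lift_gen, raise_apply]

theorem level_shift (x : K n) (l : ℕ) : level (n + 1) (shift n x) (l + 1) = level n x l + 1 := by
  induction x using induction_right generalizing l with
  | one => simp [end_one_apply]
  | mul_gen x i ih =>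
    have level_gen_succ : level (n + 1) (gen i.succ) (l + 1) = level n (gen i) l + 1 := by
      simp only [level_gen, Fin.val_succ]; grind
    simp [end_mul_apply, level_gen_succ, ih]

theorem level_fEl (n : ℕ) : level n (fEl n) 0 = n := by
  induction n with
  | zero => simp [Subsingleton.elim (fEl 0) 1, end_one_apply]
  | succ n ih => simp [fEl_succ, end_mul_apply, level_gen, level_shift, ih]

theorem mul_gen_eq_self_of_level_eq {x : K n} {l : ℕ} (h : level n x l = n) {i : Fin n}
    (hi : l ≤ i.val) : x * gen i = x := by
  induction x using induction_right generalizing l i with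
  | one => rw [map_one, end_one_apply] at h; omega
  | mul_gen x k ih =>
    rw [map_mul, end_mul_apply, level_gen] at h
    rcases lt_trichotomy k i with hki | rfl | hik
    · have absorb : x * gen i = x := ih h (by split_ifs <;> grind)
      calc x * gen k * gen i
          = x * gen i * gen k * gen i := by rw [absorb]
        _ = x * (gen i * gen k * gen i) := by simp only [mul_assoc]
        _ = x * gen k := by rw [isKiselman_gen.mul_mul_of_lt hki, ← mul_assoc, absorb]
    · rw [mul_assoc, isKiselman_gen.mul_self]
    · rw [Fin.lt_def] at hik
      rw [if_neg (by omega)] at h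
      rw [ih h (by omega), ih h hi]

theorem mul_map_eq_self {M : Type*} [Monoid M] (f : K n →* M) {x : M}
    (h : ∀ i, x * f (gen i) = x) (y : K n) : x * f y = x := by
  induction y using induction_right with
  | one => simp
  | mul_gen y i ih => rw [map_mul, ← mul_assoc, ih, h]

theorem shift_mul_gen_zero_mul_shift_of_mul_eq_fEl {p q : K n} (h : p * q = fEl n) :
    shift n p * gen 0 * shift n q = shift n p * gen 0 * shift n (fEl n) := by
  have level_eq : level (n + 1) (shift n p * gen 0 * shift n q) 1 = n + 1 := by
    have level_level : level n p (level n q 0) = n := by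
      simpa only [← h, map_mul, end_mul_apply] using level_fEl n
    simp [end_mul_apply, level_shift q 0, level_gen, level_shift, level_level]
  have absorb : shift n p * gen 0 * shift n q * shift n (fEl n) = shift n p * gen 0 * shift n q :=
    mul_map_eq_self (shift n) (fun i => by
      rw [shift_gen]
      exact mul_gen_eq_self_of_level_eq level_eq (by simp)) (fEl n)
  rw [← absorb, mul_assoc _ (shift n q), ← map_mul, mul_fEl]

/-- The left action of `K (n + 1)` on `Option (K n)` in which the smallest generator replaces
`none` by `some 1`, and the others act by multiplication. The image of `none` under `x` is what
precedes the last occurrence of the smallest generator in `x`, with the smallest generator deleted;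
it is `none` if there is no such occurrence. -/
def leftPart (n : ℕ) : K (n + 1) →* Function.End (Option (K n)) :=
  lift (Fin.cons (fun o => some (o.getD 1)) (MulAction.toEndHom ∘ gen)) <|
    (isKiselman_gen.map MulAction.toEndHom).cons rfl
      (fun i => by
        funext o
        cases o with
        | none => rfl
        | some y =>
          have absorb : gen i * (gen i * y) = gen i * y := by
            rw [← mul_assoc, isKiselman_gen.mul_self]
          exact congrArg some absorb)
      (fun _ => rfl)

theorem leftPart_gen_zero (o : Option (K n)) : leftPart n (gen 0) o = some (o.getD 1) :=
  congrFun (lift_gen (M := Function.End (Option (K n))) ..) o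

theorem leftPart_gen_succ (i : Fin n) (o : Option (K n)) :
    leftPart n (gen i.succ) o = gen i • o :=
  congrFun (lift_gen (M := Function.End (Option (K n))) ..) o

theorem leftPart_shift (y : K n) (o : Option (K n)) : leftPart n (shift n y) o = y • o := by
  induction y using induction_right generalizing o with
  | one => simp [end_one_apply]
  | mul_gen y i ih => simp [end_mul_apply, ih, leftPart_gen_succ, mul_smul]

/-- The parametrisation of the solutions `x` of `x * gen 0 = fEl (n + 1)` by `Option (K n)`. -/
def solution (n : ℕ) (o : Option (K n)) : K (n + 1) :=
  o.elim (shift n (fEl n)) fun p => shift n p * gen 0 * shift n (fEl n)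

theorem leftPart_solution (o : Option (K n)) : leftPart n (solution n o) none = o := by
  cases o <;> simp [solution, end_mul_apply, leftPart_shift, leftPart_gen_zero]

theorem solution_injective (n : ℕ) : Function.Injective (solution n) :=
  Function.LeftInverse.injective (g := fun x => leftPart n x none) leftPart_solution

theorem range_solution (n : ℕ) :
    Set.range (solution n) = {x | x * gen 0 = fEl (n + 1)} := by
  ext x
  rw [Set.mem_ofPred_eq, mul_gen_zero_eq_fEl_iff]
  constructor
  · rintro ⟨_ | p, rfl⟩ <;> simp [solution, mul_fEl]
  · intro hx
    rcases eq_shift_or_eq_shift_mul_gen_zero_mul_shift x with ⟨y, rfl⟩ | ⟨p, q, rfl⟩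
    · exact ⟨none, congrArg (shift n) (by simpa using hx.symm)⟩
    · have hpq : p * q = fEl n := by simpa using hx
      exact ⟨some p, (shift_mul_gen_zero_mul_shift_of_mul_eq_fEl hpq).symm⟩

/-- The number of solutions of `x * a_1 = f` in `K n` is `1 + |K_{n-1}|`. -/
theorem card_solutions (n : ℕ) (hn : 2 ≤ n) :
    Nat.card {x : K n // x * gen ⟨0, by omega⟩ = fEl n} = 1 + Nat.card (K (n - 1)) := by
  obtain ⟨m, rfl⟩ : ∃ m, n = m + 1 := ⟨n - 1, by omega⟩
  calc Nat.card {x : K (m + 1) | x * gen 0 = fEl (m + 1)}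
      = Nat.card (Set.range (solution m)) := by rw [range_solution]
    _ = Nat.card (Option (K m)) := Nat.card_range_of_injective (solution_injective m)
    _ = 1 + Nat.card (K m) := by rw [Finite.card_option, add_comm]

end Kiselman
end

section
/- For every n ≥ 1, the cardinality |K_n| of Kiselman's semigroup K_n is even if n is odd, and odd if n is even. Equivalently, for every k ≥ 1, |K_{2k+1}| is even and |K_{2k}| is odd (and |K_1| = 2 is even). -/
namespace Kiselman

/-!
A word is canonical exactly when no letter can be erased by the relation `a_i u a_i = u a_i`, valid
if all letters of `u` are at least `i`, or by `a_i u a_i = a_i u`, valid if they are at most `i`.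
These erasures have the diamond property, so every element of `K n` is represented by exactly one
canonical word. Reversal does not descend to `K n`, but it preserves the set of canonical words. A
canonical word that is a palindrome has length at most `1`, since in the middle of a longer one
stands a factor `a a` or `a b a`. So this involution has exactly `n + 1` fixed points, and
`|K n| ≡ n + 1` modulo `2`.
-/

section Erasure

open Relation

variable {α : Type*}

/-- `Absorbs r a l`: reading `l` from the left, one meets `a` after letters `k` with `r a k` only.
For `r = (· ≤ ·)` this makes an `a` written before `l` superfluous in Kiselman's semigroup; for
`r = (· ≥ ·)` it does so for an `a` written after the reversal of `l`. -/
inductive Absorbs (r : α → α → Prop) (a : α) : List α → Prop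
  | head (l : List α) : Absorbs r a (a :: l)
  | cons {k : α} {l : List α} (hk : r a k) (hl : Absorbs r a l) : Absorbs r a (k :: l)

namespace Absorbs

variable {r : α → α → Prop} {a b : α} {l y z : List α}

theorem append_left (hz : ∀ k ∈ z, r a k) (h : Absorbs r a l) : Absorbs r a (z ++ l) := by
  induction z with
  | nil => exact h
  | cons k z ih => exact .cons (hz k (by simp)) (ih fun j hj => hz j (by simp [hj]))

theorem append_right (h : Absorbs r a l) (y : List α) : Absorbs r a (l ++ y) := by
  induction h with
  | head l => exact .head _
  | cons hk _ ih => exact .cons hk ih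

theorem exists_eq_append (h : Absorbs r a l) : ∃ u v, l = u ++ a :: v ∧ ∀ k ∈ u, r a k := by
  induction h with
  | head l => exact ⟨[], l, by simp⟩
  | @cons k l hk _ ih =>
    obtain ⟨u, v, rfl, hu⟩ := ih
    exact ⟨k :: u, v, rfl, by simpa using ⟨hk, hu⟩⟩

theorem of_append_cons (h : Absorbs r a (z ++ b :: y)) :
    Absorbs r a (z ++ y) ∨ a = b ∧ ∀ k ∈ z, r a k := by
  induction z with
  | nil =>
    cases h with
    | head => exact .inr ⟨rfl, by simp⟩
    | cons _ hl => exact .inl hl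
  | cons k z ih =>
    cases h with
    | head => exact .inl (.head _)
    | cons hk hl => exact (ih hl).imp (.cons hk) fun ⟨hab, hz⟩ => ⟨hab, by simpa using ⟨hk, hz⟩⟩

theorem erase [Std.Antisymm r] {x : List α} (ha : Absorbs r a (z ++ b :: y))
    (hb : Absorbs r b y ∨ Absorbs (Function.swap r) b (z.reverse ++ x)) :
    (z = [] ∧ a = b) ∨ Absorbs r a (z ++ y) := by
  rcases ha.of_append_cons with h | ⟨rfl, hz⟩
  · exact .inr h
  rcases hb with hy | hx
  · exact .inr (hy.append_left hz)
  rcases z.eq_nil_or_concat with rfl | ⟨z, k, rfl⟩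
  · exact .inl ⟨rfl, rfl⟩
  have hka : k = a := by
    simp only [List.concat_eq_append, List.reverse_append, List.reverse_singleton,
      List.cons_append, List.nil_append] at hx
    cases hx with
    | head => rfl
    | cons hk _ => exact Std.Antisymm.antisymm k a hk (hz k (by simp))
  subst hka
  refine .inr ?_
  simpa using (head y).append_left fun j hj => hz j (by simp [hj])

end Absorbs

variable [PartialOrder α]

/-- The letter `a` of the word `x ++ a :: y` can be erased, being absorbed by `y` or by `x`. -/
def Redundant (x : List α) (a : α) (y : List α) : Prop :=
  Absorbs (· ≤ ·) a y ∨ Absorbs (· ≥ ·) a x.reverse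

/-- The rewriting relation on words that erases one redundant letter. -/
def Step (w v : List α) : Prop := ∃ x a y, w = x ++ a :: y ∧ v = x ++ y ∧ Redundant x a y

namespace Redundant

variable {x y z : List α} {a b : α}

theorem step (h : Redundant x a y) : Step (x ++ a :: y) (x ++ y) := ⟨x, a, y, rfl, rfl, h⟩

theorem erase_right (ha : Redundant x a (z ++ b :: y)) (hb : Redundant (x ++ a :: z) b y) :
    (z = [] ∧ a = b) ∨ Redundant x a (z ++ y) := by
  rcases ha with ha | ha
  · exact (ha.erase (x := a :: x.reverse) (by simpa [Redundant] using hb)).imp_right .inl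
  · exact .inr (.inr ha)

theorem erase_left (ha : Redundant x a (z ++ b :: y)) (hb : Redundant (x ++ a :: z) b y) :
    (z = [] ∧ a = b) ∨ Redundant (x ++ z) b y := by
  rcases hb with hb | hb
  · exact .inr (.inl hb)
  have hb' : Absorbs (· ≥ ·) b (z.reverse ++ a :: x.reverse) := by simpa using hb
  have ha' : Absorbs (· ≥ ·) a x.reverse ∨
      Absorbs (Function.swap (· ≥ ·)) a (z.reverse.reverse ++ b :: y) := by
    rw [List.reverse_reverse]
    exact ha.symm
  refine (hb'.erase ha').imp (fun ⟨hz, hab⟩ => ⟨by simpa using hz, hab.symm⟩) fun h => .inr ?_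
  simpa using h

theorem join (ha : Redundant x a (z ++ b :: y)) (hb : Redundant (x ++ a :: z) b y) :
    Join (ReflGen Step) (x ++ (z ++ b :: y)) (x ++ a :: z ++ y) := by
  rcases ha.erase_right hb with ⟨rfl, rfl⟩ | ha'
  · exact ⟨x ++ a :: y, by simpa using .refl, by simpa using .refl⟩
  rcases ha.erase_left hb with ⟨rfl, rfl⟩ | hb'
  · exact ⟨x ++ a :: y, by simpa using .refl, by simpa using .refl⟩
  exact ⟨x ++ z ++ y, .single (by simpa using hb'.step), .single (by simpa using ha'.step)⟩

end Redundant

namespace Step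

variable {w v v' : List α}

theorem length_lt (h : Step w v) : v.length < w.length := by
  obtain ⟨x, a, y, rfl, rfl, -⟩ := h
  simp

theorem append (h : Step w v) (l r : List α) : Step (l ++ w ++ r) (l ++ v ++ r) := by
  obtain ⟨x, a, y, rfl, rfl, h⟩ := h
  have h' : Redundant (l ++ x) a (y ++ r) :=
    h.imp (·.append_right r) fun h => by simpa using h.append_right l.reverse
  simpa using h'.step

theorem diamond (h : Step w v) (h' : Step w v') : Join (ReflGen Step) v v' := by
  obtain ⟨x, a, y, rfl, rfl, ha⟩ := h
  obtain ⟨x', b, y', hw, rfl, hb⟩ := h'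
  rcases List.append_eq_append_iff.1 hw with ⟨z, rfl, hz⟩ | ⟨z, rfl, hz⟩ <;>
    rcases List.cons_eq_append_iff.1 hz with ⟨rfl, hy⟩ | ⟨z, rfl, rfl⟩
  · obtain ⟨rfl, rfl⟩ := List.cons.inj hy
    exact ⟨x ++ y', by simpa using .refl, by simpa using .refl⟩
  · exact ha.join hb
  · obtain ⟨rfl, rfl⟩ := List.cons.inj hy
    exact ⟨x' ++ y, by simpa using .refl, by simpa using .refl⟩
  · exact symm (hb.join ha)

end Step

theorem equivalence_join_step : Equivalence (Join (ReflTransGen (Step (α := α)))) :=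
  equivalence_join_reflTransGen fun _ _ _ h h' =>
    let ⟨d, hd, hd'⟩ := h.diamond h'
    ⟨d, hd, hd'.to_reflTransGen⟩

theorem reflTransGen_step_append {u u' v v' : List α} (hu : ReflTransGen Step u u')
    (hv : ReflTransGen Step v v') : ReflTransGen Step (u ++ v) (u' ++ v') :=
  (hu.lift (· ++ v) fun _ _ h => by simpa using h.append [] v).trans
    (hv.lift (u' ++ ·) fun _ _ h => by simpa using h.append u' [])

/-- The congruence on the free monoid that identifies two words if erasures lead from both of them
to a common word. -/
def joinCon (α : Type*) [PartialOrder α] : Con (FreeMonoid α) where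
  r u v := Join (ReflTransGen Step) u.toList v.toList
  iseqv := equivalence_join_step.comap FreeMonoid.toList
  mul' := fun ⟨d, hud, hvd⟩ ⟨e, hue, hve⟩ =>
    ⟨d ++ e, by simpa using reflTransGen_step_append hud hue,
      by simpa using reflTransGen_step_append hvd hve⟩

end Erasure

theorem card_modEq_card_fixedPoints_of_involutive {α : Type*} [Finite α] {f : α → α}
    (hf : f.Involutive) : Nat.card α ≡ Nat.card (Function.fixedPoints f) [MOD 2] := by
  classical
  have := Fintype.ofFinite α
  have : Fact (Nat.Prime 2) := ⟨Nat.prime_two⟩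
  let φ : Function.End α := f
  have hφ : φ ^ 2 ^ 1 = 1 := funext hf
  rw [Nat.card_eq_fintype_card, Nat.card_eq_fintype_card]
  exact Equiv.Perm.card_fixedPoints_modEq hφ

section Canonical

variable {n : ℕ}

theorem canonical_iff_forall_not_step {w : List (Fin n)} : Canonical w ↔ ∀ v, ¬ Step w v := by
  constructor
  · rintro hw _ ⟨x, i, y, rfl, -, h | h⟩
    · obtain ⟨u, q, rfl, hu⟩ := h.exists_eq_append
      obtain ⟨-, k, hk, hki⟩ := hw x u q i (by simp)
      exact (hu k hk).not_gt hki
    · obtain ⟨u, p, hx, hu⟩ := h.exists_eq_append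
      obtain rfl : x = p.reverse ++ i :: u.reverse := by simpa using congrArg List.reverse hx
      obtain ⟨⟨j, hj, hij⟩, -⟩ := hw p.reverse u.reverse y i (by simp)
      exact (hu j (by simpa using hj)).not_gt hij
  · rintro hw p u q i rfl
    constructor <;> by_contra! hu
    · have h : Redundant (p ++ i :: u) i q :=
        .inr (by simpa using (Absorbs.head p.reverse).append_left (by simpa using hu))
      exact hw _ (by simpa using h.step)
    · have h : Redundant p i (u ++ i :: q) := .inl ((Absorbs.head q).append_left hu)
      exact hw _ (by simpa using h.step)

namespace Canonical

variable {w : List (Fin n)}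

theorem reverse (h : Canonical w) : Canonical w.reverse := by
  intro p u q i hw
  simpa using h q.reverse u.reverse p.reverse i (by simpa using congrArg List.reverse hw)

theorem of_append {l r : List (Fin n)} (h : Canonical (l ++ w ++ r)) : Canonical w := by
  rintro p u q i rfl
  exact h (l ++ p) u (q ++ r) i (by simp)

theorem length_lt_two_pow {m : ℕ} (h : Canonical w) (hm : ∀ k ∈ w, k.val < m) :
    w.length < 2 ^ m := by
  induction m generalizing w with
  | zero => simp [List.eq_nil_iff_forall_not_mem.2 fun k hk => absurd (hm k hk) (by simp)]
  | succ m ih =>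
    have lt_of_ne {k : Fin n} (hk : k ∈ w) (hkm : k.val ≠ m) : k.val < m :=
      lt_of_le_of_ne (Nat.lt_succ_iff.1 (hm k hk)) hkm
    rw [pow_succ]
    by_cases hmw : ∃ i ∈ w, i.val = m
    · obtain ⟨i, hiw, hi⟩ := hmw
      obtain ⟨p, q, rfl, hip⟩ := List.eq_append_cons_of_mem hiw
      have hiq : i ∉ q := by
        intro hiq
        obtain ⟨u, y, rfl⟩ := List.append_of_mem hiq
        obtain ⟨⟨j, hj, hij⟩, -⟩ := h p u y i (by simp)
        have := hm j (by simp [hj])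
        omega
      have hp : p.length < 2 ^ m := ih (of_append (l := []) (r := i :: q) (by simpa using h))
        fun k hk => lt_of_ne (by simp [hk]) fun hkm => hip (Fin.ext (hkm.trans hi.symm) ▸ hk)
      have hq : q.length < 2 ^ m := ih (of_append (l := p ++ [i]) (r := []) (by simpa using h))
        fun k hk => lt_of_ne (by simp [hk]) fun hkm => hiq (Fin.ext (hkm.trans hi.symm) ▸ hk)
      rw [List.length_append, List.length_cons]
      omega
    · have := ih h fun k hk => lt_of_ne hk fun hkm => hmw ⟨k, hk, hkm⟩
      omega

theorem length_le_one_of_palindrome (h : Canonical w) (hw : w.Palindrome) : w.length ≤ 1 := by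
  induction hw with
  | nil => simp
  | singleton a => simp
  | @cons_concat a l _ ih =>
    obtain ⟨⟨j, hj, haj⟩, k, hk, hka⟩ := h [] l [] a (by simp)
    have hl : l.length ≤ 1 := ih (of_append (l := [a]) (r := [a]) (by simpa using h))
    obtain ⟨b, rfl⟩ := List.length_eq_one_iff.1 (hl.antisymm (List.length_pos_of_mem hj))
    rw [List.mem_singleton] at hj hk
    subst hj hk
    exact absurd haj hka.asymm

end Canonical

theorem canonical_of_length_le_one {w : List (Fin n)} (hw : w.length ≤ 1) : Canonical w := by
  rintro p u q i rfl
  simp only [List.length_append, List.length_singleton] at hw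
  omega

instance : Finite {w : List (Fin n) // Canonical w} :=
  ((List.finite_length_lt (Fin n) (2 ^ n)).subset
    fun _ hw => Canonical.length_lt_two_pow hw fun k _ => k.isLt).to_subtype

/-- Reversal of canonical words, the involution whose fixed points are counted. -/
def reverseCanonical (w : {w : List (Fin n) // Canonical w}) : {w : List (Fin n) // Canonical w} :=
  ⟨w.1.reverse, w.2.reverse⟩

theorem reverseCanonical_involutive : Function.Involutive (reverseCanonical (n := n)) :=
  fun w => Subtype.ext w.1.reverse_reverse

theorem card_fixedPoints_reverseCanonical (n : ℕ) :
    Nat.card (Function.fixedPoints (reverseCanonical (n := n))) = n + 1 := by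
  let f (o : Option (Fin n)) : Function.fixedPoints (reverseCanonical (n := n)) :=
    ⟨⟨o.toList, canonical_of_length_le_one (by cases o <;> simp)⟩,
      Subtype.ext (by cases o <;> simp [reverseCanonical])⟩
  have hf : Function.Bijective f := by
    refine ⟨fun a b h => ?_, ?_⟩
    · have hab : a.toList = b.toList := congrArg (·.1.1) h
      cases a <;> cases b <;> simp_all
    · rintro ⟨⟨w, hw⟩, hfix⟩
      have hrev : w.reverse = w := congrArg Subtype.val hfix
      match w, hw.length_le_one_of_palindrome (.of_reverse_eq hrev) with
      | [], _ => exact ⟨none, rfl⟩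
      | [a], _ => exact ⟨some a, rfl⟩
  simpa using (Nat.card_eq_of_bijective f hf).symm

theorem card_canonical_modEq_two (n : ℕ) :
    Nat.card {w : List (Fin n) // Canonical w} ≡ n + 1 [MOD 2] :=
  card_fixedPoints_reverseCanonical n ▸
    card_modEq_card_fixedPoints_of_involutive reverseCanonical_involutive

end Canonical

section Presentation

variable {n : ℕ}

theorem phiL_append (u v : List (Fin n)) : phiL n (u ++ v) = phiL n u * phiL n v := by
  simp [phiL, FreeMonoid.ofList_append]

theorem phiL_cons (i : Fin n) (v : List (Fin n)) : phiL n (i :: v) = gen i * phiL n v := by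
  simp [phiL, gen, FreeMonoid.ofList_cons]

theorem phiL_singleton (i : Fin n) : phiL n [i] = gen i := rfl

theorem phiL_surjective : Function.Surjective (phiL n) :=
  Con.mk'_surjective.comp FreeMonoid.ofList.surjective

theorem phi_eq_of_rel {u v : FreeMonoid (Fin n)} (h : Rel n u v) : phi n u = phi n v :=
  (Con.eq _).2 (ConGen.Rel.of _ _ h)

theorem gen_mul_self (i : Fin n) : gen i * gen i = gen i :=
  phi_eq_of_rel (.inl ⟨i, rfl, rfl⟩)

theorem gen_mul_gen_mul_gen_of_ge {i j : Fin n} (h : i ≥ j) :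
    gen i * gen j * gen i = gen i * gen j := by
  rcases h.eq_or_lt with rfl | h
  · simp only [gen_mul_self]
  · exact phi_eq_of_rel (.inr ⟨i, j, h, .inl ⟨rfl, rfl⟩⟩)

theorem gen_mul_gen_mul_gen_of_le {i j : Fin n} (h : i ≤ j) :
    gen i * gen j * gen i = gen j * gen i := by
  rcases h.eq_or_lt with rfl | h
  · simp only [gen_mul_self]
  · exact phi_eq_of_rel (.inr ⟨j, i, h, .inr ⟨rfl, rfl⟩⟩)

theorem Absorbs.gen_mul_phiL {i : Fin n} {w : List (Fin n)} (h : Absorbs (· ≤ ·) i w) :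
    gen i * phiL n w = phiL n w := by
  induction h with
  | head l => rw [phiL_cons, ← mul_assoc, gen_mul_self]
  | @cons k l hk _ ih =>
    calc gen i * phiL n (k :: l)
        = gen i * gen k * gen i * phiL n l := by rw [phiL_cons, mul_assoc _ (gen i), ih, mul_assoc]
      _ = gen k * gen i * phiL n l := by rw [gen_mul_gen_mul_gen_of_le hk]
      _ = phiL n (k :: l) := by rw [mul_assoc, ih, phiL_cons]

theorem Absorbs.phiL_reverse_mul_gen {i : Fin n} {w : List (Fin n)} (h : Absorbs (· ≥ ·) i w) :
    phiL n w.reverse * gen i = phiL n w.reverse := by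
  induction h with
  | head l =>
    rw [List.reverse_cons, phiL_append, phiL_singleton, mul_assoc, gen_mul_self]
  | @cons k l hk _ ih =>
    rw [List.reverse_cons, phiL_append, phiL_singleton]
    calc phiL n l.reverse * gen k * gen i
        = phiL n l.reverse * (gen i * gen k * gen i) := by rw [← mul_assoc, ← mul_assoc, ih]
      _ = phiL n l.reverse * (gen i * gen k) := by rw [gen_mul_gen_mul_gen_of_ge hk]
      _ = phiL n l.reverse * gen k := by rw [← mul_assoc, ih]

theorem Step.phiL_eq {w v : List (Fin n)} (h : Step w v) : phiL n w = phiL n v := by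
  obtain ⟨x, i, y, rfl, rfl, h | h⟩ := h
  · rw [phiL_append, phiL_cons, h.gen_mul_phiL, phiL_append]
  · have hx : phiL n x * gen i = phiL n x := by simpa using h.phiL_reverse_mul_gen
    rw [phiL_append, phiL_cons, ← mul_assoc, hx, phiL_append]

theorem Rel.step {u v : FreeMonoid (Fin n)} (h : Rel n u v) : Step u.toList v.toList := by
  rcases h with ⟨i, rfl, rfl⟩ | ⟨i, j, hij, ⟨rfl, rfl⟩ | ⟨rfl, rfl⟩⟩
  · exact ⟨[], i, [i], rfl, rfl, .inl (.head _)⟩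
  · exact ⟨[i, j], i, [], rfl, rfl, .inr (.cons hij.le (.head _))⟩
  · exact ⟨[], j, [i, j], rfl, rfl, .inl (.cons hij.le (.head _))⟩

theorem conGen_rel_le_joinCon : conGen (Rel n) ≤ joinCon (Fin n) :=
  Con.conGen_le.2 fun _ v h => ⟨v.toList, .single h.step, .refl⟩

theorem Canonical.eq_of_phiL_eq {u v : List (Fin n)} (hu : Canonical u) (hv : Canonical v)
    (h : phiL n u = phiL n v) : u = v := by
  obtain ⟨d, hud, hvd⟩ := conGen_rel_le_joinCon ((Con.eq _).1 h)
  have hdu : d = u := (Relation.reflTransGen_iff_eq (canonical_iff_forall_not_step.1 hu)).1 hud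
  have hdv : d = v := (Relation.reflTransGen_iff_eq (canonical_iff_forall_not_step.1 hv)).1 hvd
  exact hdu.symm.trans hdv

theorem exists_canonical_phiL_eq (w : List (Fin n)) : ∃ v, Canonical v ∧ phiL n v = phiL n w := by
  by_cases hw : Canonical w
  · exact ⟨w, hw, rfl⟩
  · obtain ⟨w', h⟩ : ∃ w', Step w w' := by simpa [canonical_iff_forall_not_step] using hw
    obtain ⟨v, hv, hvw'⟩ := exists_canonical_phiL_eq w'
    exact ⟨v, hv, hvw'.trans h.phiL_eq.symm⟩
termination_by w.length
decreasing_by exact h.length_lt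

theorem bijective_phiL_canonical :
    Function.Bijective fun w : {w : List (Fin n) // Canonical w} => phiL n w.1 := by
  refine ⟨fun u v h => Subtype.ext (u.2.eq_of_phiL_eq v.2 h), fun x => ?_⟩
  obtain ⟨w, rfl⟩ := phiL_surjective x
  obtain ⟨v, hv, hvw⟩ := exists_canonical_phiL_eq w
  exact ⟨⟨v, hv⟩, hvw⟩

theorem card_modEq_two (n : ℕ) : Nat.card (K n) ≡ n + 1 [MOD 2] :=
  Nat.card_eq_of_bijective _ (bijective_phiL_canonical (n := n)) ▸ card_canonical_modEq_two n

end Presentation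

/-- `|K n|` is even if `n` is odd, and odd if `n` is even. -/
theorem parity (n : ℕ) (hn : 1 ≤ n) :
    (Odd n → Even (Nat.card (K n))) ∧ (Even n → Odd (Nat.card (K n))) := by
  have h := card_modEq_two n
  simp only [Nat.odd_iff, Nat.even_iff, Nat.ModEq] at h ⊢
  omega

end Kiselman
end
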